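/- Let D be a lattice of languages over a finite alphabet A, let ρ : 2^{A*} → R be a nice rating map, and let L ∈ D. Then for every s ∈ I_{Bool(D)}[L, ρ] there exist r₁, …, r_k ∈ R such that s ≤ r₁ + ⋯ + r_k and, for every i ≤ k, the singleton {r₁ + ⋯ + r_k} ∈ I_D[L ∩ ρ_*⁻¹(r_i), τ_{Bool(D),ρ}], where τ_{Bool(D),ρ} : 2^{A*} → 2^R is the rating map K ↦ I_{Bool(D)}[K, ρ]. -/

import Mathlib

open Set

namespace Paper

abbrev Lang (A : Type) := Set (List A)
abbrev LClass (A : Type) := Set (Set (List A))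

variable {A R M : Type}

/-- A lattice of languages: contains `∅` and `A*`, closed under finite union
and finite intersection. -/
def LangLattice (𝒞 : LClass A) : Prop :=
  (∅ : Lang A) ∈ 𝒞 ∧ (Set.univ : Lang A) ∈ 𝒞 ∧
    (∀ K L : Lang A, K ∈ 𝒞 → L ∈ 𝒞 → K ∪ L ∈ 𝒞) ∧
    (∀ K L : Lang A, K ∈ 𝒞 → L ∈ 𝒞 → K ∩ L ∈ 𝒞)

/-- A Boolean algebra of languages: a lattice closed under complement. -/
def LangBoolAlg (𝒞 : LClass A) : Prop :=
  LangLattice 𝒞 ∧ ∀ L : Lang A, L ∈ 𝒞 → Lᶜ ∈ 𝒞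

/-- A class is quotient-closed when it is closed under left and right quotients
by words. -/
def QuotientClosed (𝒞 : LClass A) : Prop :=
  ∀ L ∈ 𝒞, ∀ w : List A,
    {u : List A | w ++ u ∈ L} ∈ 𝒞 ∧ {u : List A | u ++ w ∈ L} ∈ 𝒞

/-- The canonical preorder `≤_𝒞` associated with a class `𝒞`. -/
def cle (𝒞 : LClass A) (w w' : List A) : Prop := ∀ L ∈ 𝒞, w ∈ L → w' ∈ L

/-- The canonical equivalence `∼_𝒞` associated with a class `𝒞`. -/
def ceq (𝒞 : LClass A) (w w' : List A) : Prop := ∀ L ∈ 𝒞, (w ∈ L ↔ w' ∈ L)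

/-- The `∼_𝒞`-class of the word `w`. -/
def cclass (𝒞 : LClass A) (w : List A) : Lang A := {v | ceq 𝒞 w v}

/-- `D` is a `∼_𝒞`-class. -/
def IsCClass (𝒞 : LClass A) (D : Lang A) : Prop := ∃ w : List A, D = cclass 𝒞 w

/-- Multiplication of `∼_𝒞`-classes (the class of the concatenation of
representatives). -/
def cmul (𝒞 : LClass A) (D E : Lang A) : Lang A :=
  {x | ∃ u ∈ D, ∃ v ∈ E, ceq 𝒞 (u ++ v) x}

/-- Language concatenation. -/
def cat (K L : Lang A) : Lang A := {w | ∃ u ∈ K, ∃ v ∈ L, u ++ v = w}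

/-- Marked concatenation `K a L`. -/
def mcat (K : Lang A) (a : A) (L : Lang A) : Lang A :=
  {w | ∃ u ∈ K, ∃ v ∈ L, u ++ a :: v = w}

/-- Boolean closure: the least Boolean algebra containing `𝒞`. -/
def BoolC (𝒞 : LClass A) : LClass A := ⋂₀ {𝒟 : LClass A | LangBoolAlg 𝒟 ∧ 𝒞 ⊆ 𝒟}

/-- Polynomial closure: the least class containing `𝒞` closed under union and
marked concatenation. -/
def PolC (𝒞 : LClass A) : LClass A :=
  ⋂₀ {𝒟 : LClass A | 𝒞 ⊆ 𝒟 ∧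
    (∀ K L : Lang A, K ∈ 𝒟 → L ∈ 𝒟 → K ∪ L ∈ 𝒟) ∧
    (∀ (K L : Lang A) (a : A), K ∈ 𝒟 → L ∈ 𝒟 → mcat K a L ∈ 𝒟)}

/-- A cover of `L`: a finite set of languages whose union includes `L`. -/
def IsCover (Ks : LClass A) (L : Lang A) : Prop := Ks.Finite ∧ L ⊆ ⋃₀ Ks

/-- A `𝒞`-cover of `L`: a cover all of whose members belong to `𝒞`. -/
def IsCCover (𝒞 Ks : LClass A) (L : Lang A) : Prop := IsCover Ks L ∧ Ks ⊆ 𝒞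

/-- `α : A* → M` is a monoid morphism. -/
def IsMonoidMorphism [Monoid M] (α : List A → M) : Prop :=
  α [] = 1 ∧ ∀ u v : List A, α (u ++ v) = α u * α v

/-- `α` recognizes `L`. -/
def Recognizes [Monoid M] (α : List A → M) (L : Lang A) : Prop :=
  ∃ F : Set M, L = α ⁻¹' F

/-- A language is regular when it is recognized by a monoid morphism into a
finite monoid. -/
def RegularLang (L : Lang A) : Prop :=
  ∃ (N : Type) (_ : Monoid N) (_ : Finite N) (α : List A → N),
    IsMonoidMorphism α ∧ Recognizes α L

/-- The canonical order on a rating set: `r ≤ s` iff `r + s = s`. -/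
def rle [Add R] (r s : R) : Prop := r + s = s

/-- A rating map: maps `∅` to `0` and commutes with binary union. -/
def IsRatingMap [AddCommMonoid R] (ρ : Lang A → R) : Prop :=
  ρ ∅ = 0 ∧ ∀ K L : Lang A, ρ (K ∪ L) = ρ K + ρ L

/-- A nice rating map: the value of any language is a finite sum of values of
its words. -/
def IsNice [AddCommMonoid R] (ρ : Lang A → R) : Prop :=
  ∀ K : Lang A, ∃ l : List (List A), (∀ w ∈ l, w ∈ K) ∧
    ρ K = (l.map fun w => ρ {w}).sum

/-- A multiplicative rating map: also a morphism for concatenation. -/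
def IsMultiplicative [Semiring R] (ρ : Lang A → R) : Prop :=
  ρ ({[]} : Lang A) = 1 ∧ ∀ K L : Lang A, ρ (cat K L) = ρ K * ρ L

/-- An endomorphism of the additive monoid `(R, +)`. -/
def IsAddEndo [AddCommMonoid R] (γ : R → R) : Prop :=
  γ 0 = 0 ∧ ∀ r s : R, γ (r + s) = γ r + γ s

/-- A quasi-multiplicative rating map for the endomorphism `γ`. -/
def IsQuasiMult [Semiring R] (ρ : Lang A → R) (γ : R → R) : Prop :=
  IsAddEndo γ ∧ (∀ q r s : R, γ (q * γ r * s) = γ (q * r * s)) ∧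
    ∀ K L : Lang A, ρ (cat K L) = γ (ρ K * ρ L)

/-- The `ρ`-imprint of a set of languages. -/
def imprint [Add R] (ρ : Lang A → R) (Ks : LClass A) : Set R :=
  {r | ∃ K ∈ Ks, rle r (ρ K)}

/-- The `𝒟`-optimal `ρ`-imprint on `L` (the imprint of any optimal `𝒟`-cover
of `L`, i.e. the intersection of the imprints of all `𝒟`-covers of `L`). -/
def optImprint [Add R] (𝒟 : LClass A) (ρ : Lang A → R) (L : Lang A) : Set R :=
  {r | ∀ Ks : LClass A, IsCCover 𝒟 Ks L → r ∈ imprint ρ Ks}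

/-- Downset operation on subsets of a rating set. -/
def dclos [Add R] (U : Set R) : Set R := {r | ∃ s ∈ U, rle r s}

/-- Pointwise multiplication of subsets of a rating set. -/
def smul [Mul R] (U V : Set R) : Set R := {x | ∃ u ∈ U, ∃ v ∈ V, u * v = x}

/-- The imprint of a set of languages for a rating map valued in `(2^R, ∪)`
(there, the canonical order is inclusion). -/
def imprintSet (τ : Lang A → Set R) (Ks : LClass A) : Set (Set R) :=
  {U | ∃ K ∈ Ks, U ⊆ τ K}

/-- The `𝒟`-optimal imprint on `L` for a rating map valued in `(2^R, ∪)`. -/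
def optImprintSet (𝒟 : LClass A) (τ : Lang A → Set R) (L : Lang A) :
    Set (Set R) :=
  {U | ∀ Ks : LClass A, IsCCover 𝒟 Ks L → U ∈ imprintSet τ Ks}

theorem boolC_sub (𝒟 : LClass A) : 𝒟 ⊆ BoolC 𝒟 := fun _ hK _ h => h.2 hK

theorem boolC_alg (𝒟 : LClass A) : LangBoolAlg (BoolC 𝒟) := by
  refine ⟨⟨fun E h => h.1.1.1, fun E h => h.1.1.2.1, ?_, ?_⟩, ?_⟩
  · exact fun K L hK hL E h => h.1.1.2.2.1 K L (hK E h) (hL E h)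
  · exact fun K L hK hL E h => h.1.1.2.2.2 K L (hK E h) (hL E h)
  · exact fun L hL E h => h.1.2 L (hL E h)

theorem lat_sUnion {𝒞 : LClass A} (h : LangLattice 𝒞) {S : LClass A} (hS : S.Finite)
    (hsub : S ⊆ 𝒞) : ⋃₀ S ∈ 𝒞 := by
  induction S, hS using Set.Finite.induction_on with
  | empty => simpa using h.1
  | insert _ _ ih =>
    rw [Set.sUnion_insert]
    exact h.2.2.1 _ _ (hsub (Set.mem_insert _ _)) (ih fun x hx => hsub (Set.mem_insert_of_mem _ hx))

theorem lat_sInter {𝒞 : LClass A} (h : LangLattice 𝒞) {S : LClass A} (hS : S.Finite)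
    (hsub : S ⊆ 𝒞) : ⋂₀ S ∈ 𝒞 := by
  induction S, hS using Set.Finite.induction_on with
  | empty => simpa using h.2.1
  | insert _ _ ih =>
    rw [Set.sInter_insert]
    exact h.2.2.2 _ _ (hsub (Set.mem_insert _ _)) (ih fun x hx => hsub (Set.mem_insert_of_mem _ hx))

theorem rle_trans' [AddCommMonoid R] {a b c : R} (h : rle a b) (h' : rle b c) : rle a c := by
  unfold rle at *
  rw [← h', ← add_assoc, h]

theorem rating_mono [AddCommMonoid R] {ρ : Lang A → R} (hρ : IsRatingMap ρ) {K L : Lang A}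
    (h : K ⊆ L) : rle (ρ K) (ρ L) := by
  unfold rle
  rw [← hρ.2, Set.union_eq_self_of_subset_left h]

theorem exists_uf [AddCommMonoid R] (𝒟 : LClass A) (ρ : Lang A → R) (L : Lang A) (s : R)
    (hs : s ∈ optImprint (BoolC 𝒟) ρ L) :
    ∃ U : Ultrafilter (List A), L ∈ U ∧ ∀ B ∈ BoolC 𝒟, B ∈ U → rle s (ρ B) := by
  obtain ⟨U, hU⟩ := Ultrafilter.exists_ultrafilter_of_finite_inter_nonempty
    (insert L {X : Lang A | Xᶜ ∈ BoolC 𝒟 ∧ ¬ rle s (ρ Xᶜ)}) (by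
      intro T hT
      by_contra hne
      have hc : IsCCover (BoolC 𝒟)
          {K : Lang A | Kᶜ ∈ T ∧ K ∈ BoolC 𝒟 ∧ ¬ rle s (ρ K)} L := by
        refine ⟨⟨?_, ?_⟩, fun K hK => hK.2.1⟩
        · refine Set.Finite.subset (T.finite_toSet.image compl) ?_
          rintro K ⟨hK, -⟩
          exact ⟨Kᶜ, hK, compl_compl K⟩
        · intro w hw
          by_contra hw'
          apply hne
          refine ⟨w, fun X hX => ?_⟩
          rcases hT hX with rfl | hX'
          · exact hw
          · by_contra hwX
            exact hw' ⟨Xᶜ, ⟨by simpa using hX, hX'.1, hX'.2⟩, hwX⟩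
      obtain ⟨K, hK, hle⟩ := hs _ hc
      exact hK.2.2 hle)
  refine ⟨U, hU (Set.mem_insert _ _), fun B hB hBU => ?_⟩
  by_contra hn
  have : Bᶜ ∈ U := hU (Set.mem_insert_of_mem _ (by
    show Bᶜᶜ ∈ BoolC 𝒟 ∧ ¬ rle s (ρ Bᶜᶜ)
    rw [compl_compl]; exact ⟨hB, hn⟩))
  exact (Ultrafilter.compl_mem_iff_notMem.1 this) hBU

/-- For a lattice `𝒟`, a nice rating map `ρ` and `L ∈ 𝒟`:
every `s ∈ I_{Bool(𝒟)}[L, ρ]` is below a sum `r₁ + ⋯ + r_k` such that for each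
`i`, `{r₁ + ⋯ + r_k}` belongs to the `𝒟`-optimal `τ_{Bool(𝒟),ρ}`-imprint on
`L ∩ ρ_*⁻¹(r_i)`, where `τ_{Bool(𝒟),ρ} : K ↦ I_{Bool(𝒟)}[K, ρ]`. -/
theorem statement18 {A R : Type} [Fintype A] [AddCommMonoid R] [Finite R]
    (hidem : ∀ r : R, r + r = r)
    (𝒟 : LClass A) (hlat : LangLattice 𝒟)
    (ρ : Lang A → R) (hρ : IsRatingMap ρ) (hnice : IsNice ρ)
    (L : Lang A) (hL : L ∈ 𝒟) (s : R) (hs : s ∈ optImprint (BoolC 𝒟) ρ L) :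
    ∃ l : List R, l ≠ [] ∧ rle s l.sum ∧
      ∀ r ∈ l, ({l.sum} : Set R) ∈
        optImprintSet 𝒟 (fun K => optImprint (BoolC 𝒟) ρ K)
          (L ∩ {w : List A | ρ {w} = r}) := by
  obtain ⟨U, hLU, hU⟩ := exists_uf 𝒟 ρ L s hs
  have hB := boolC_alg 𝒟
  have hsub := boolC_sub 𝒟
  have h1 : ∀ t : R, ∃ B ∈ BoolC 𝒟, B ∈ U ∧
      ((∃ C ∈ BoolC 𝒟, C ∈ U ∧ ¬ rle t (ρ C)) → ¬ rle t (ρ B)) := by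
    intro t
    by_cases h : ∃ C ∈ BoolC 𝒟, C ∈ U ∧ ¬ rle t (ρ C)
    · obtain ⟨C, hC, hCU, hn⟩ := h
      exact ⟨C, hC, hCU, fun _ => hn⟩
    · exact ⟨Set.univ, hB.1.2.1, Filter.univ_mem, fun h' => absurd h' h⟩
  have h2 : ∀ r : R, ∃ B ∈ BoolC 𝒟, B ∈ U ∧
      ((∃ C ∈ BoolC 𝒟, C ∈ U ∧ ∀ w ∈ C, ρ {w} ≠ r) → ∀ w ∈ B, ρ {w} ≠ r) := by
    intro t
    by_cases h : ∃ C ∈ BoolC 𝒟, C ∈ U ∧ ∀ w ∈ C, ρ {w} ≠ t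
    · obtain ⟨C, hC, hCU, hn⟩ := h
      exact ⟨C, hC, hCU, fun _ => hn⟩
    · exact ⟨Set.univ, hB.1.2.1, Filter.univ_mem, fun h' => absurd h' h⟩
  choose B hBB hBU hBn using h1
  choose C hCB hCU hCn using h2
  have hfin : (Set.range B ∪ Set.range C).Finite :=
    (Set.finite_range B).union (Set.finite_range C)
  obtain ⟨E, hE⟩ : ∃ E : Lang A, E = ⋂₀ (Set.range B ∪ Set.range C) := ⟨_, rfl⟩
  have hEB : E ∈ BoolC 𝒟 := by
    rw [hE]
    refine lat_sInter hB.1 hfin ?_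
    rintro _ (⟨t, rfl⟩ | ⟨t, rfl⟩)
    · exact hBB t
    · exact hCB t
  have hEU : E ∈ U := by
    rw [hE]
    refine (Filter.sInter_mem hfin).2 ?_
    rintro _ (⟨t, rfl⟩ | ⟨t, rfl⟩)
    · exact hBU t
    · exact hCU t
  have hEsB : ∀ t, E ⊆ B t := fun t => hE ▸ Set.sInter_subset_of_mem (Or.inl ⟨t, rfl⟩)
  have hEsC : ∀ t, E ⊆ C t := fun t => hE ▸ Set.sInter_subset_of_mem (Or.inr ⟨t, rfl⟩)
  have hmin : ∀ K ∈ BoolC 𝒟, K ∈ U → rle (ρ E) (ρ K) := by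
    intro K hK hKU
    by_contra hn
    exact hBn (ρ E) ⟨K, hK, hKU, hn⟩ (rating_mono hρ (hEsB _))
  obtain ⟨l, hl, hsum⟩ := hnice E
  obtain ⟨w₀, hw₀⟩ := Ultrafilter.nonempty_of_mem hEU
  have hsum' : (((w₀ :: l).map fun w => ρ {w}).sum) = ρ E := by
    rw [List.map_cons, List.sum_cons, ← hsum]
    exact rating_mono hρ (Set.singleton_subset_iff.2 hw₀)
  refine ⟨(w₀ :: l).map fun w => ρ {w}, by simp, ?_, ?_⟩
  · rw [hsum']; exact hU E hEB hEU
  · rw [hsum']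
    intro r hr Ks hKs
    obtain ⟨w, hw, rfl⟩ := List.mem_map.1 hr
    have hwE : w ∈ E := by
      rcases List.mem_cons.1 hw with rfl | h
      · exact hw₀
      · exact hl w h
    have hKU : ⋃₀ Ks ∈ U := by
      by_contra hn
      have hc := Ultrafilter.compl_mem_iff_notMem.2 hn
      refine hCn (ρ {w}) ⟨L ∩ (⋃₀ Ks)ᶜ, ?_, Filter.inter_mem hLU hc, ?_⟩ w (hEsC _ hwE) rfl
      · exact hB.1.2.2.2 _ _ (hsub hL)
          (hB.2 _ (lat_sUnion hB.1 hKs.1.1 (hKs.2.trans hsub)))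
      · rintro v ⟨hvL, hv⟩ hvr
        exact hv (hKs.1.2 ⟨hvL, hvr⟩)
    obtain ⟨K, hK, hKm⟩ := (Ultrafilter.finite_sUnion_mem_iff hKs.1.1).1 hKU
    refine ⟨K, hK, Set.singleton_subset_iff.2 ?_⟩
    intro Ks' hKs'
    obtain ⟨K', hK', hKm'⟩ := (Ultrafilter.finite_sUnion_mem_iff hKs'.1.1).1
      (Filter.mem_of_superset hKm hKs'.1.2)
    exact ⟨K', hK', hmin K' (hKs'.2 hK') hKm'⟩

end Paper
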